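/- arXiv:2311.06591 — 2 statements merged into one kernel-verified Lean document; each statement's English description precedes it below -/
import Mathlib

section
/- For every τ in the complex upper half-plane, β(−1/τ)·(2c(τ) − 1)²·(c(τ) + 1) = 3·(4c(τ)³ + 6c(τ) + 1); equivalently β(−1/τ) = 3 + 27c(τ)/((2c(τ)−1)²(c(τ)+1)). -/
open Complex

/-- The nome `q = exp(2πiτ)`. -/
noncomputable def nome (τ : ℂ) : ℂ := Complex.exp (2 * Real.pi * I * τ)

/-- Ramanujan's cubic continued fraction, as an infinite product:
`c(τ) = q^{1/3} ∏_{n≥1} (1-q^{6n-1})(1-q^{6n-5})/(1-q^{6n-3})²`. -/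
noncomputable def c (τ : ℂ) : ℂ :=
  Complex.exp (2 * Real.pi * I * τ / 3) *
    ∏' n : ℕ,
      ((1 - nome τ ^ (6 * (n + 1) - 1)) * (1 - nome τ ^ (6 * (n + 1) - 5)) /
        (1 - nome τ ^ (6 * (n + 1) - 3)) ^ 2)

/-- The Dedekind eta function `η(τ) = e^{πiτ/12} ∏_{n≥1} (1 - e^{2πinτ})`. -/
noncomputable def dedekindEta (τ : ℂ) : ℂ :=
  Complex.exp (Real.pi * I * τ / 12) *
    ∏' n : ℕ, (1 - Complex.exp (2 * Real.pi * I * (n + 1) * τ))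

/-- `α(τ) = 3 + 27 η(9τ)³/η(τ)³`. -/
noncomputable def alpha (τ : ℂ) : ℂ :=
  3 + 27 * dedekindEta (9 * τ) ^ 3 / dedekindEta τ ^ 3

/-- `β(τ) = 3 + η(τ/3)³/η(3τ)³`. -/
noncomputable def beta (τ : ℂ) : ℂ :=
  3 + dedekindEta (τ / 3) ^ 3 / dedekindEta (3 * τ) ^ 3

open Filter Topology

/-- The reciprocal `1 / ((1 - p) ⋯ (1 - p ^ m))` of the `q`-Pochhammer symbol, which is `0` for
negative `m`. -/
noncomputable def invPochhammer (p : ℂ) (m : ℤ) : ℂ :=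
  if 0 ≤ m then (∏ i ∈ Finset.range m.toNat, (1 - p ^ (i + 1)))⁻¹ else 0

lemma one_sub_pow_ne_zero {p : ℂ} (hp : ‖p‖ < 1) (n : ℕ) : 1 - p ^ (n + 1) ≠ 0 := by
  intro h
  have h1 : ‖p ^ (n + 1)‖ < 1 := by
    rw [norm_pow]
    exact pow_lt_one₀ (norm_nonneg _) hp (by simp)
  rw [← sub_eq_zero.mp h] at h1
  simp at h1

lemma invPochhammer_sub_one {p : ℂ} (hp : ‖p‖ < 1) (m : ℤ) :
    invPochhammer p (m - 1) = (1 - p ^ m) * invPochhammer p m := by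
  rcases lt_trichotomy m 0 with h | rfl | h
  · simp [invPochhammer, not_le.mpr h, show ¬ (1 ≤ m) by omega]
  · simp [invPochhammer]
  · obtain ⟨n, rfl⟩ : ∃ n : ℕ, m = n + 1 := ⟨(m - 1).toNat, by omega⟩
    have h1 := one_sub_pow_ne_zero hp n
    simp only [invPochhammer, add_sub_cancel_right, Int.natCast_nonneg, if_true, Int.toNat_natCast,
      show (0 : ℤ) ≤ n + 1 by omega, show ((n : ℤ) + 1).toNat = n + 1 by omega,
      Finset.prod_range_succ, mul_inv]
    rw [show p ^ ((n : ℤ) + 1) = p ^ (n + 1) by exact_mod_cast zpow_natCast p (n + 1)]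
    field_simp

lemma hasSum_finite_triple_product {q z : ℂ} (hq0 : q ≠ 0) (hq : ‖q‖ < 1) (hz : z ≠ 0) (N : ℕ) :
    HasSum (fun k : ℤ ↦ q ^ (k ^ 2) * z ^ k * ((∏ i ∈ Finset.range (2 * N), (1 - (q ^ 2) ^ (i + 1)))
        * invPochhammer (q ^ 2) (N - k) * invPochhammer (q ^ 2) (N + k)))
      (∏ n ∈ Finset.range N, ((1 + z * q ^ (2 * n + 1)) * (1 + z⁻¹ * q ^ (2 * n + 1)))) := by
  have hp : ‖q ^ 2‖ < 1 := by
    rw [norm_pow]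
    exact pow_lt_one₀ (norm_nonneg _) hq (by simp)
  induction N with
  | zero =>
    rw [Finset.prod_range_zero]
    convert! hasSum_ite_eq (0 : ℤ) (1 : ℂ) using 2 with k
    rcases lt_trichotomy k 0 with h | rfl | h
    · simp [invPochhammer, not_le.mpr h, h.ne]
    · simp [invPochhammer]
    · simp [invPochhammer, not_le.mpr h, h.ne']
  | succ N ih =>
    have h1 := ((Equiv.subRight (1 : ℤ)).hasSum_iff.mpr ih).mul_left (q ^ (2 * N + 1) * z)
    have h2 := ((Equiv.addRight (1 : ℤ)).hasSum_iff.mpr ih).mul_left (q ^ (2 * N + 1) * z⁻¹)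
    have h3 := ih.mul_left (1 + q ^ (4 * N + 2))
    convert! (h3.add h1).add h2 using 1
    · ext k
      simp only [Function.comp_apply, Equiv.subRight_apply, Equiv.coe_addRight]
      have hA1 := invPochhammer_sub_one hp (N + 1 - k)
      have hA2 := invPochhammer_sub_one hp (N - k)
      have hB1 := invPochhammer_sub_one hp (N + 1 + k)
      have hB2 := invPochhammer_sub_one hp (N + k)
      rw [show (N : ℤ) + 1 - k - 1 = N - k by ring] at hA1
      rw [show (N : ℤ) + 1 + k - 1 = N + k by ring] at hB1
      rw [show (N : ℤ) - (k - 1) = N + 1 - k by ring, show (N : ℤ) + (k - 1) = N + k - 1 by ring,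
        show (N : ℤ) - (k + 1) = N - k - 1 by ring, show (N : ℤ) + (k + 1) = N + 1 + k by ring,
        hA2, hB2, hA1, hB1]
      push_cast
      rw [show 2 * (N + 1) = 2 * N + 1 + 1 by ring, Finset.prod_range_succ, Finset.prod_range_succ]
      generalize invPochhammer (q ^ 2) (N + 1 - k) = A
      generalize invPochhammer (q ^ 2) (N + 1 + k) = B
      generalize ∏ i ∈ Finset.range (2 * N), (1 - (q ^ 2) ^ (i + 1)) = Q
      have hp0 : q ^ 2 ≠ 0 := pow_ne_zero _ hq0
      obtain ⟨u, hu⟩ : ∃ u, u = q ^ (2 * N) := ⟨_, rfl⟩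
      obtain ⟨v, hv⟩ : ∃ v, v = (q ^ 2) ^ k := ⟨_, rfl⟩
      have hv0 : v ≠ 0 := hv ▸ zpow_ne_zero _ hp0
      have e1 : (q ^ 2) ^ ((N : ℤ) + 1 - k) = u * q ^ 2 / v := by
        rw [zpow_sub₀ hp0, zpow_add₀ hp0, hu, hv]; simp [pow_mul]
      have e2 : (q ^ 2) ^ ((N : ℤ) - k) = u / v := by
        rw [zpow_sub₀ hp0, hu, hv]; simp [pow_mul]
      have e3 : (q ^ 2) ^ ((N : ℤ) + 1 + k) = u * q ^ 2 * v := by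
        rw [zpow_add₀ hp0, zpow_add₀ hp0, hu, hv]; simp [pow_mul]
      have e4 : (q ^ 2) ^ ((N : ℤ) + k) = u * v := by
        rw [zpow_add₀ hp0, hu, hv]; simp [pow_mul]
      have e5 : q ^ ((k - 1) ^ 2) = q ^ (k ^ 2) * q / v := by
        rw [show (k - 1) ^ 2 = k ^ 2 + 1 - 2 * k by ring, zpow_sub₀ hq0, zpow_add₀ hq0, hv,
          zpow_mul]; simp
      have e6 : q ^ ((k + 1) ^ 2) = q ^ (k ^ 2) * q * v := by
        rw [show (k + 1) ^ 2 = k ^ 2 + 1 + 2 * k by ring, zpow_add₀ hq0, zpow_add₀ hq0, hv,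
          zpow_mul]; simp
      rw [e1, e2, e3, e4, e5, e6, zpow_sub_one₀ hz, zpow_add_one₀ hz,
        show (q ^ 2) ^ (2 * N + 1) = u ^ 2 * q ^ 2 by rw [hu]; ring,
        show (q ^ 2) ^ (2 * N + 1 + 1) = u ^ 2 * q ^ 4 by rw [hu]; ring,
        show q ^ (2 * N + 1) = u * q by rw [hu]; ring,
        show q ^ (4 * N + 2) = u ^ 2 * q ^ 2 by rw [hu]; ring]
      field_simp
      ring
    · rw [Finset.prod_range_succ]
      field_simp
      ring

lemma summable_triple_product {q z : ℂ} (hq0 : q ≠ 0) (hq : ‖q‖ < 1) (hz : z ≠ 0) :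
    Summable fun k : ℤ ↦ q ^ (k ^ 2) * z ^ k := by
  have hπ : (Real.pi : ℂ) ≠ 0 := by exact_mod_cast Real.pi_ne_zero
  have him : 0 < (Complex.log q / (Real.pi * I)).im := by
    have : (Complex.log q / (Real.pi * I)) = ((Real.pi⁻¹ : ℝ) : ℂ) * (-(I * Complex.log q)) := by
      push_cast
      field_simp
      rw [I_sq]; ring
    rw [this, Complex.im_ofReal_mul]
    have : Real.log ‖q‖ < 0 := Real.log_neg (norm_pos_iff.mpr hq0) hq
    simp [Complex.log_re]
    have := Real.pi_pos
    nlinarith [inv_pos.mpr this]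
  refine ((summable_jacobiTheta₂_term_iff (Complex.log z / (2 * Real.pi * I)) _).mpr him).congr ?_
  intro k
  rw [jacobiTheta₂_term, Complex.exp_add, mul_comm]
  congr 1
  · rw [← Complex.exp_log hq0, ← Complex.exp_int_mul, Complex.exp_log hq0]
    congr 1
    push_cast
    field_simp
  · rw [← Complex.exp_log hz, ← Complex.exp_int_mul, Complex.exp_log hz]
    congr 1
    field_simp

lemma multipliable_one_add_mul_pow {x : ℂ} (hx : ‖x‖ < 1) (w : ℂ) {a : ℕ} (ha : a ≠ 0) (b : ℕ) :
    Multipliable fun n : ℕ ↦ 1 + w * x ^ (a * n + b) := by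
  apply multipliable_one_add_of_summable
  have h : ‖x ^ a‖ < 1 := by
    rw [norm_pow]
    exact pow_lt_one₀ (norm_nonneg _) hx ha
  refine ((summable_geometric_of_lt_one (norm_nonneg _) h).mul_left (‖w‖ * ‖x ^ b‖)).congr ?_
  intro n
  rw [← norm_pow, ← pow_mul, ← norm_mul, ← norm_mul]
  congr 1
  ring

/-- The Euler product `∏ (1 - x ^ (n + 1))`. -/
noncomputable def eulerProd (x : ℂ) : ℂ := ∏' n : ℕ, (1 - x ^ (n + 1))

lemma eulerProd_ne_zero {x : ℂ} (hx : ‖x‖ < 1) : eulerProd x ≠ 0 := by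
  refine tprod_one_add_ne_zero_of_summable (f := fun n ↦ -x ^ (n + 1)) ?_ ?_
  · exact fun n ↦ one_sub_pow_ne_zero hx n
  · simpa using (summable_nat_add_iff 1).mpr (summable_geometric_of_lt_one (norm_nonneg _) hx)

lemma tendsto_eulerProd {x : ℂ} (hx : ‖x‖ < 1) :
    Tendsto (fun n ↦ ∏ i ∈ Finset.range n, (1 - x ^ (i + 1))) atTop (𝓝 (eulerProd x)) :=
  (ModularForm.multipliable_one_sub_pow hx).hasProd.tendsto_prod_nat

lemma tendsto_invPochhammer {p : ℂ} (hp : ‖p‖ < 1) :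
    Tendsto (fun m : ℤ ↦ invPochhammer p m) atTop (𝓝 (eulerProd p)⁻¹) := by
  have h := ((tendsto_eulerProd hp).inv₀ (eulerProd_ne_zero hp)).comp
    (tendsto_atTop_atTop.mpr fun b ↦ ⟨(b : ℤ), fun a ha ↦ by omega⟩ :
      Tendsto Int.toNat atTop atTop)
  refine h.congr' ?_
  filter_upwards [eventually_ge_atTop 0] with m hm
  simp [invPochhammer, hm]

lemma exists_norm_invPochhammer_le {p : ℂ} (hp : ‖p‖ < 1) :
    ∃ C, ∀ m, ‖invPochhammer p m‖ ≤ C := by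
  obtain ⟨C, hC⟩ := (Metric.isBounded_range_of_tendsto _
    ((tendsto_eulerProd hp).inv₀ (eulerProd_ne_zero hp))).exists_norm_le
  refine ⟨C, fun m ↦ ?_⟩
  unfold invPochhammer
  split_ifs
  · exact hC _ ⟨m.toNat, rfl⟩
  · simpa using (norm_nonneg _).trans (hC _ ⟨0, rfl⟩)

/-- The Jacobi triple product identity. -/
theorem tsum_eq_triple_product {q z : ℂ} (hq0 : q ≠ 0) (hq : ‖q‖ < 1) (hz : z ≠ 0) :
    ∑' k : ℤ, q ^ (k ^ 2) * z ^ k = eulerProd (q ^ 2) *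
      ((∏' n : ℕ, (1 + z * q ^ (2 * n + 1))) * ∏' n : ℕ, (1 + z⁻¹ * q ^ (2 * n + 1))) := by
  have hp : ‖q ^ 2‖ < 1 := by
    rw [norm_pow]
    exact pow_lt_one₀ (norm_nonneg _) hq (by simp)
  have hE := eulerProd_ne_zero hp
  have hm1 := multipliable_one_add_mul_pow hq z two_ne_zero 1
  have hm2 := multipliable_one_add_mul_pow hq z⁻¹ two_ne_zero 1
  obtain ⟨C, hC⟩ := exists_norm_invPochhammer_le hp
  obtain ⟨D, hD⟩ := (Metric.isBounded_range_of_tendsto _ (tendsto_eulerProd hp)).exists_norm_le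
  have hC0 : 0 ≤ C := (norm_nonneg _).trans (hC 0)
  have hD0 : 0 ≤ D := (norm_nonneg _).trans (hD _ ⟨0, rfl⟩)
  have key := tendsto_tsum_of_dominated_convergence (𝓕 := atTop)
    (f := fun (N : ℕ) (k : ℤ) ↦ q ^ (k ^ 2) * z ^ k *
      ((∏ i ∈ Finset.range (2 * N), (1 - (q ^ 2) ^ (i + 1)))
        * invPochhammer (q ^ 2) (N - k) * invPochhammer (q ^ 2) (N + k)))
    (g := fun k ↦ q ^ (k ^ 2) * z ^ k *
      (eulerProd (q ^ 2) * (eulerProd (q ^ 2))⁻¹ * (eulerProd (q ^ 2))⁻¹))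
    (bound := fun k ↦ ‖q ^ (k ^ 2) * z ^ k‖ * (D * C * C))
    ((summable_triple_product hq0 hq hz).norm.mul_right _) ?_ ?_
  · simp_rw [(hasSum_finite_triple_product hq0 hq hz _).tsum_eq] at key
    have h2 := (hm1.mul hm2).hasProd.tendsto_prod_nat
    have := tendsto_nhds_unique key h2
    rw [hm1.tprod_mul hm2, tsum_mul_right] at this
    rw [← this]
    field_simp
  · intro k
    refine tendsto_const_nhds.mul ((Tendsto.mul ?_ ?_).mul ?_)
    · exact (tendsto_eulerProd hp).comp (tendsto_id.const_mul_atTop' two_pos)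
    · refine (tendsto_invPochhammer hp).comp ?_
      exact tendsto_atTop_add_const_right _ (-k) tendsto_natCast_atTop_atTop
    · refine (tendsto_invPochhammer hp).comp ?_
      exact tendsto_atTop_add_const_right _ k tendsto_natCast_atTop_atTop
  · refine .of_forall fun N k ↦ ?_
    rw [norm_mul, norm_mul (_ * _), norm_mul (∏ i ∈ _, _)]
    gcongr
    · exact hD _ ⟨_, rfl⟩
    · exact hC _
    · exact hC _

lemma tsum_int_eq_add_three_mul {f : ℤ → ℂ} (hf : Summable f) :
    ∑' k, f k = ∑' k, f (3 * k) + ∑' k, f (3 * k + 1) + ∑' k, f (3 * k - 1) := by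
  have hs : Summable fun p : ℤ × Fin 3 ↦ f ((Int.divModEquiv 3).symm p) :=
    (Int.divModEquiv 3).symm.summable_iff.mpr hf
  have h1 := (Int.divModEquiv 3).symm.tsum_eq f
  have hj : ∀ j : Fin 3, Summable fun m : ℤ ↦ f ((Int.divModEquiv 3).symm (m, j)) := fun j ↦
    hs.comp_injective (i := fun m : ℤ ↦ (m, j)) (fun a b h ↦ by simpa using h)
  rw [← h1, hs.tsum_prod]
  simp_rw [tsum_fintype]
  rw [Summable.tsum_finsetSum fun j _ ↦ hj j, Fin.sum_univ_three,
    ← (Equiv.addRight (1 : ℤ)).tsum_eq fun k ↦ f (3 * k - 1)]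
  congr 1
  · congr 1 <;> exact tsum_congr fun k ↦ by simp [Int.divModEquiv]; ring_nf
  · exact tsum_congr fun k ↦ by simp [Int.divModEquiv]; ring_nf

lemma tprod_mul_tprod_mul_tprod_three_mul {f : ℕ → ℂ} (hf : Multipliable f)
    (h0 : Multipliable fun n ↦ f (3 * n)) (h1 : Multipliable fun n ↦ f (3 * n + 1))
    (h2 : Multipliable fun n ↦ f (3 * n + 2)) :
    (∏' n, f (3 * n)) * (∏' n, f (3 * n + 1)) * (∏' n, f (3 * n + 2)) = ∏' n, f n := by
  have hl := (h0.hasProd.tendsto_prod_nat.mul h1.hasProd.tendsto_prod_nat).mul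
    h2.hasProd.tendsto_prod_nat
  have hr := hf.hasProd.tendsto_prod_nat.comp (tendsto_id.const_mul_atTop' (three_pos (α := ℕ)))
  refine tendsto_nhds_unique hl (hr.congr fun n ↦ ?_)
  simp only [Function.comp_apply, id]
  induction n with
  | zero => simp
  | succ n ih =>
    rw [show 3 * (n + 1) = 3 * n + 1 + 1 + 1 by ring]
    simp only [Finset.prod_range_succ, ih]
    ring

/-- The product `∏ (1 - x ^ (2 * n + 1))`. -/
noncomputable def oddProd (x : ℂ) : ℂ := ∏' n : ℕ, (1 - x ^ (2 * n + 1))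

/-- The product `∏ (1 + x ^ (n + 1))`. -/
noncomputable def plusProd (x : ℂ) : ℂ := ∏' n : ℕ, (1 + x ^ (n + 1))

section Products

variable {x : ℂ}

lemma norm_pow_lt_one (hx : ‖x‖ < 1) {n : ℕ} (hn : n ≠ 0) : ‖x ^ n‖ < 1 := by
  rw [norm_pow]
  exact pow_lt_one₀ (norm_nonneg _) hx hn

lemma multipliable_one_sub_pow_linear (hx : ‖x‖ < 1) {a : ℕ} (ha : a ≠ 0) (b : ℕ) :
    Multipliable fun n : ℕ ↦ 1 - x ^ (a * n + b) := by
  simpa [sub_eq_add_neg] using multipliable_one_add_mul_pow hx (-1) ha b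

lemma multipliable_one_add_pow_linear (hx : ‖x‖ < 1) {a : ℕ} (ha : a ≠ 0) (b : ℕ) :
    Multipliable fun n : ℕ ↦ 1 + x ^ (a * n + b) := by
  simpa using multipliable_one_add_mul_pow hx 1 ha b

lemma oddProd_mul_eulerProd_sq (hx : ‖x‖ < 1) : oddProd x * eulerProd (x ^ 2) = eulerProd x := by
  have h := tprod_even_mul_odd (f := fun n ↦ 1 - x ^ (n + 1))
    (multipliable_one_sub_pow_linear hx two_ne_zero 1)
    (multipliable_one_sub_pow_linear hx two_ne_zero 2)
  rw [oddProd, eulerProd, eulerProd, ← h]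
  congr 1
  exact tprod_congr fun n ↦ by rw [← pow_mul]; ring_nf

lemma plusProd_mul_eulerProd (hx : ‖x‖ < 1) : plusProd x * eulerProd x = eulerProd (x ^ 2) := by
  have h1 := multipliable_one_add_pow_linear hx one_ne_zero 1
  simp only [one_mul] at h1
  rw [plusProd, eulerProd, eulerProd, ← h1.tprod_mul (ModularForm.multipliable_one_sub_pow hx)]
  exact tprod_congr fun n ↦ by ring

lemma tprod_one_sub_pow_mod_six (hx : ‖x‖ < 1) :
    (∏' n : ℕ, (1 - x ^ (6 * n + 5))) * (∏' n : ℕ, (1 - x ^ (6 * n + 1))) * oddProd (x ^ 3) =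
      oddProd x := by
  have h6 : (6 : ℕ) ≠ 0 := by norm_num
  have e : ∀ b c n : ℕ, c = 2 * b + 1 → 1 - x ^ (2 * (3 * n + b) + 1) = 1 - x ^ (6 * n + c) := by
    rintro b c n rfl
    ring_nf
  have h := tprod_mul_tprod_mul_tprod_three_mul (f := fun n ↦ 1 - x ^ (2 * n + 1))
    (multipliable_one_sub_pow_linear hx two_ne_zero 1)
    ((multipliable_one_sub_pow_linear hx h6 1).congr fun n ↦ (e 0 1 n rfl).symm)
    ((multipliable_one_sub_pow_linear hx h6 3).congr fun n ↦ (e 1 3 n rfl).symm)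
    ((multipliable_one_sub_pow_linear hx h6 5).congr fun n ↦ (e 2 5 n rfl).symm)
  have e3 : oddProd (x ^ 3) = ∏' n : ℕ, (1 - x ^ (6 * n + 3)) :=
    tprod_congr fun n ↦ by rw [← pow_mul]; ring_nf
  have e0 (n : ℕ) := e 0 1 n rfl
  simp only [add_zero] at e0
  simp only [e0, e 1 3 _ rfl, e 2 5 _ rfl] at h
  rw [e3, oddProd, ← h]
  ring

lemma tprod_one_add_pow_mod_three (hx : ‖x‖ < 1) :
    (∏' n : ℕ, (1 + x ^ (3 * n + 2))) * (∏' n : ℕ, (1 + x ^ (3 * n + 1))) * plusProd (x ^ 3) =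
      plusProd x := by
  have hm := multipliable_one_add_pow_linear hx one_ne_zero 1
  simp only [one_mul] at hm
  have h := tprod_mul_tprod_mul_tprod_three_mul (f := fun n ↦ 1 + x ^ (n + 1)) hm
    (multipliable_one_add_pow_linear hx three_ne_zero 1)
    (multipliable_one_add_pow_linear hx three_ne_zero 2)
    (multipliable_one_add_pow_linear hx three_ne_zero 3)
  have e3 : plusProd (x ^ 3) = ∏' n : ℕ, (1 + x ^ (3 * n + 2 + 1)) :=
    tprod_congr fun n ↦ by rw [← pow_mul]; ring_nf
  rw [e3, plusProd, ← h]
  ring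

end Products

/-- The theta series `∑ (-1) ^ k x ^ (k ^ 2)`. -/
noncomputable def altTheta (x : ℂ) : ℂ := ∑' k : ℤ, x ^ (k ^ 2) * (-1) ^ k

/-- The theta series `∑ s ^ (k ^ 2 + k)`. -/
noncomputable def triangularTheta (s : ℂ) : ℂ := ∑' k : ℤ, s ^ (k ^ 2) * s ^ k

section Theta

variable {x s : ℂ}

lemma altTheta_mul_eulerProd_sq (hx0 : x ≠ 0) (hx : ‖x‖ < 1) :
    altTheta x * eulerProd (x ^ 2) = eulerProd x ^ 2 := by
  rw [altTheta, tsum_eq_triple_product hx0 hx (by norm_num), ← oddProd_mul_eulerProd_sq hx,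
    oddProd]
  simp only [inv_neg, inv_one, neg_one_mul, ← sub_eq_add_neg]
  ring

lemma triangularTheta_mul_eulerProd (hs0 : s ≠ 0) (hs : ‖s‖ < 1) :
    triangularTheta s * eulerProd (s ^ 2) = 2 * eulerProd (s ^ 4) ^ 2 := by
  have hx := norm_pow_lt_one hs two_ne_zero
  have hm := multipliable_one_add_pow_linear hx one_ne_zero 1
  simp only [one_mul] at hm
  have h1 : ∏' n : ℕ, (1 + s * s ^ (2 * n + 1)) = plusProd (s ^ 2) :=
    tprod_congr fun n ↦ by rw [← pow_mul]; ring
  have h2 : ∏' n : ℕ, (1 + s⁻¹ * s ^ (2 * n + 1)) = 2 * plusProd (s ^ 2) := by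
    have : ∀ n : ℕ, 1 + s⁻¹ * s ^ (2 * n + 1) = 1 + (s ^ 2) ^ n := fun n ↦ by
      rw [← pow_mul, pow_succ]; field_simp
    simp only [this]
    rw [tprod_eq_zero_mul' (f := fun n ↦ 1 + (s ^ 2) ^ n) hm, plusProd, pow_zero]
    norm_num
  rw [triangularTheta, tsum_eq_triple_product hs0 hs hs0, h1, h2,
    show s ^ 4 = (s ^ 2) ^ 2 by ring, ← plusProd_mul_eulerProd hx]
  ring

lemma altTheta_eq_sub (hx0 : x ≠ 0) (hx : ‖x‖ < 1) :
    altTheta x = altTheta (x ^ 9) - 2 * x * (eulerProd (x ^ 18) *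
      ((∏' n : ℕ, (1 - (x ^ 3) ^ (6 * n + 5))) * ∏' n : ℕ, (1 - (x ^ 3) ^ (6 * n + 1)))) := by
  have hx9 := norm_pow_lt_one hx (n := 9) (by norm_num)
  have hz : -x ^ 6 ≠ 0 := neg_ne_zero.mpr (pow_ne_zero _ hx0)
  have hJ := tsum_eq_triple_product (pow_ne_zero 9 hx0) hx9 hz
  have e1 : ∀ n : ℕ, 1 + -x ^ 6 * (x ^ 9) ^ (2 * n + 1) = 1 - (x ^ 3) ^ (6 * n + 5) := fun n ↦ by
    simp only [← pow_mul]; ring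
  have e2 : ∀ n : ℕ, 1 + (-x ^ 6)⁻¹ * (x ^ 9) ^ (2 * n + 1) = 1 - (x ^ 3) ^ (6 * n + 1) :=
    fun n ↦ by simp only [← pow_mul]; field_simp; ring
  simp only [e1, e2, ← pow_mul x 9 2] at hJ
  norm_num only at hJ
  rw [← hJ]
  have sgn : ∀ k : ℤ, (-1 : ℂ) ^ (3 * k) = (-1) ^ k := fun k ↦ by
    rw [zpow_mul]; norm_num
  have sgn' : ∀ k : ℤ, ((-1 : ℂ) ^ k)⁻¹ = (-1) ^ k := fun k ↦ by
    rw [← inv_zpow]; norm_num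
  have p1 : ∀ k : ℤ, (x ^ 9) ^ (k ^ 2) = x ^ (9 * k ^ 2) := fun k ↦ by
    rw [zpow_mul]; norm_cast
  have p2 : ∀ k : ℤ, (-x ^ 6) ^ k = x ^ (6 * k) * (-1) ^ k := fun k ↦ by
    rw [← neg_one_mul, mul_zpow, zpow_mul, mul_comm]; norm_cast
  rw [altTheta, tsum_int_eq_add_three_mul (summable_triple_product hx0 hx (by norm_num)), altTheta]
  have t1 : ∑' k : ℤ, x ^ ((3 * k + 1) ^ 2) * (-1) ^ (3 * k + 1) =
      -x * ∑' k : ℤ, (x ^ 9) ^ (k ^ 2) * (-x ^ 6) ^ k := by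
    rw [← tsum_mul_left]
    refine tsum_congr fun k ↦ ?_
    rw [p1, p2, zpow_add_one₀ (by norm_num), sgn,
      show (3 * k + 1) ^ 2 = 9 * k ^ 2 + 6 * k + 1 by ring, zpow_add_one₀ hx0, zpow_add₀ hx0]
    ring
  have t2 : ∑' k : ℤ, x ^ ((3 * k - 1) ^ 2) * (-1) ^ (3 * k - 1) =
      -x * ∑' k : ℤ, (x ^ 9) ^ (k ^ 2) * (-x ^ 6) ^ k := by
    rw [← tsum_mul_left, ← (Equiv.neg ℤ).tsum_eq]
    refine tsum_congr fun k ↦ ?_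
    rw [Equiv.neg_apply, p1, p2, zpow_sub_one₀ (by norm_num), sgn, zpow_neg, sgn',
      show (3 * -k - 1) ^ 2 = 9 * k ^ 2 + 6 * k + 1 by ring, zpow_add_one₀ hx0, zpow_add₀ hx0]
    ring
  rw [t1, t2]
  have t0 : ∑' k : ℤ, x ^ ((3 * k) ^ 2) * (-1) ^ (3 * k) =
      ∑' k : ℤ, (x ^ 9) ^ (k ^ 2) * (-1) ^ k :=
    tsum_congr fun k ↦ by rw [p1, sgn]; ring_nf
  rw [t0]
  ring

lemma triangularTheta_eq_add (hs0 : s ≠ 0) (hs : ‖s‖ < 1) :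
    triangularTheta s = s ^ 2 * triangularTheta (s ^ 9) + 2 * (eulerProd (s ^ 18) *
      ((∏' n : ℕ, (1 + (s ^ 6) ^ (3 * n + 2))) * ∏' n : ℕ, (1 + (s ^ 6) ^ (3 * n + 1)))) := by
  have hs9 := norm_pow_lt_one hs (n := 9) (by norm_num)
  have hJ := tsum_eq_triple_product (pow_ne_zero 9 hs0) hs9 (pow_ne_zero 3 hs0)
  have e1 : ∀ n : ℕ, 1 + s ^ 3 * (s ^ 9) ^ (2 * n + 1) = 1 + (s ^ 6) ^ (3 * n + 2) := fun n ↦ by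
    simp only [← pow_mul]; ring
  have e2 : ∀ n : ℕ, 1 + (s ^ 3)⁻¹ * (s ^ 9) ^ (2 * n + 1) = 1 + (s ^ 6) ^ (3 * n + 1) :=
    fun n ↦ by simp only [← pow_mul]; field_simp; ring
  simp only [e1, e2, ← pow_mul s 9 2] at hJ
  norm_num only at hJ
  rw [← hJ]
  have p : ∀ (n : ℕ) (k : ℤ), (s ^ n) ^ k = s ^ (n * k) := fun n k ↦ by
    rw [zpow_mul, zpow_natCast]
  rw [triangularTheta, tsum_int_eq_add_three_mul (summable_triple_product hs0 hs hs0),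
    triangularTheta]
  have t0 : ∑' k : ℤ, s ^ ((3 * k) ^ 2) * s ^ (3 * k) =
      ∑' k : ℤ, (s ^ 9) ^ (k ^ 2) * (s ^ 3) ^ k :=
    tsum_congr fun k ↦ by rw [p, p]; push_cast; ring_nf
  have t1 : ∑' k : ℤ, s ^ ((3 * k + 1) ^ 2) * s ^ (3 * k + 1) =
      s ^ 2 * ∑' k : ℤ, (s ^ 9) ^ (k ^ 2) * (s ^ 9) ^ k := by
    rw [← tsum_mul_left]
    refine tsum_congr fun k ↦ ?_
    rw [p, p, ← zpow_natCast s 2]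
    simp only [← zpow_add₀ hs0]
    push_cast
    ring_nf
  have t2 : ∑' k : ℤ, s ^ ((3 * k - 1) ^ 2) * s ^ (3 * k - 1) =
      ∑' k : ℤ, (s ^ 9) ^ (k ^ 2) * (s ^ 3) ^ k := by
    rw [← (Equiv.neg ℤ).tsum_eq]
    refine tsum_congr fun k ↦ ?_
    rw [Equiv.neg_apply, p, p]
    simp only [← zpow_add₀ hs0]
    push_cast
    ring_nf
  rw [t0, t1, t2]
  ring

end Theta

lemma c_mul_oddProd_sq {τ : ℂ} (h : ‖nome τ‖ < 1) :
    c τ * oddProd (nome τ ^ 3) ^ 2 = cexp (2 * Real.pi * I * τ / 3) *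
      ((∏' n : ℕ, (1 - nome τ ^ (6 * n + 5))) * ∏' n : ℕ, (1 - nome τ ^ (6 * n + 1))) := by
  have h6 : (6 : ℕ) ≠ 0 := by norm_num
  have m1 := multipliable_one_sub_pow_linear h h6 1
  have m3 := multipliable_one_sub_pow_linear h h6 3
  have m5 := multipliable_one_sub_pow_linear h h6 5
  have e3 : oddProd (nome τ ^ 3) = ∏' n : ℕ, (1 - nome τ ^ (6 * n + 3)) :=
    tprod_congr fun n ↦ by rw [← pow_mul]; ring_nf
  have h9 : oddProd (nome τ ^ 3) ≠ 0 := by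
    have h3 := norm_pow_lt_one h three_ne_zero
    have := eulerProd_ne_zero h3
    rw [← oddProd_mul_eulerProd_sq h3] at this
    exact left_ne_zero_of_mul this
  have h9' : ∏' n : ℕ, (1 - nome τ ^ (6 * n + 3)) ^ 2 ≠ 0 := by
    rw [m3.tprod_pow, ← e3]
    exact pow_ne_zero _ h9
  have hc : c τ = cexp (2 * Real.pi * I * τ / 3) * ∏' n : ℕ,
      ((1 - nome τ ^ (6 * n + 5)) * (1 - nome τ ^ (6 * n + 1)) /
        (1 - nome τ ^ (6 * n + 3)) ^ 2) := by
    rw [c]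
    congr 1
  rw [hc, (m5.mul m1).tprod_div₀ (m3.pow 2) h9', m5.tprod_mul m1, m3.tprod_pow, ← e3]
  field_simp

lemma c_eulerProd_identity {τ : ℂ} (hτ : 0 < τ.im) :
    (2 * c τ - 1) ^ 2 * (c τ + 1) * (cexp (2 * Real.pi * I * τ / 3) *
      eulerProd (cexp (2 * Real.pi * I * τ / 3) ^ 9) ^ 3) =
    c τ * eulerProd (cexp (2 * Real.pi * I * τ / 3)) ^ 3 := by
  obtain ⟨s, hs⟩ : ∃ s, s = cexp (Real.pi * I * τ / 3) := ⟨_, rfl⟩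
  have hs0 : s ≠ 0 := hs ▸ Complex.exp_ne_zero _
  have hs1 : ‖s‖ < 1 := by
    have : (Real.pi * I * τ / 3).re = -(Real.pi * τ.im / 3) := by
      rw [show Real.pi * I * τ / 3 = ((Real.pi / 3 : ℝ) : ℂ) * (I * τ) by push_cast; ring,
        Complex.re_ofReal_mul]
      simp
      ring
    rw [hs, Complex.norm_exp, Real.exp_lt_one_iff, this, neg_lt_zero]
    positivity
  have hsx : cexp (2 * Real.pi * I * τ / 3) = s ^ 2 := by
    rw [hs, ← Complex.exp_nat_mul]; congr 1; push_cast; ring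
  have hn : nome τ = s ^ 6 := by
    rw [hs, nome, ← Complex.exp_nat_mul]; congr 1; push_cast; ring
  have hlt (n : ℕ) (hn : n ≠ 0) : ‖s ^ n‖ < 1 := norm_pow_lt_one hs1 hn
  have hx0 : s ^ 2 ≠ 0 := pow_ne_zero 2 hs0
  have hcO := c_mul_oddProd_sq (τ := τ) (hn ▸ hlt 6 (by norm_num))
  have hT := tprod_one_sub_pow_mod_six (hlt 6 (by norm_num))
  have hU := tprod_one_add_pow_mod_three (hlt 6 (by norm_num))
  have hA := altTheta_mul_eulerProd_sq hx0 (hlt 2 (by norm_num))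
  have hA9 := altTheta_mul_eulerProd_sq (pow_ne_zero 18 hs0) (hlt 18 (by norm_num))
  have hd := altTheta_eq_sub hx0 (hlt 2 (by norm_num))
  have hB := triangularTheta_mul_eulerProd hs0 hs1
  have hB9 := triangularTheta_mul_eulerProd (pow_ne_zero 9 hs0) (hlt 9 (by norm_num))
  have hd' := triangularTheta_eq_add hs0 hs1
  have hO3 := oddProd_mul_eulerProd_sq (hlt 6 (by norm_num))
  have hO9 := oddProd_mul_eulerProd_sq (hlt 18 (by norm_num))
  have hP3 := plusProd_mul_eulerProd (hlt 6 (by norm_num))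
  have hP9 := plusProd_mul_eulerProd (hlt 18 (by norm_num))
  rw [hsx] at hcO ⊢
  rw [hn] at hcO
  simp only [← pow_mul s] at *
  norm_num only at *
  have n1 := eulerProd_ne_zero (hlt 2 (by norm_num))
  have n2 := eulerProd_ne_zero (hlt 4 (by norm_num))
  have n3 := eulerProd_ne_zero (hlt 6 (by norm_num))
  have n6 := eulerProd_ne_zero (hlt 12 (by norm_num))
  have n9 := eulerProd_ne_zero (hlt 18 (by norm_num))
  have n18 := eulerProd_ne_zero (hlt 36 (by norm_num))
  generalize (∏' n : ℕ, (1 - s ^ (6 * (6 * n + 5)))) * ∏' n : ℕ, (1 - s ^ (6 * (6 * n + 1))) = T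
    at *
  generalize (∏' n : ℕ, (1 + s ^ (6 * (3 * n + 2)))) * ∏' n : ℕ, (1 + s ^ (6 * (3 * n + 1))) = U
    at *
  generalize eulerProd (s ^ 2) = e1 at *
  generalize eulerProd (s ^ 4) = e2 at *
  generalize eulerProd (s ^ 6) = e3 at *
  generalize eulerProd (s ^ 12) = e6 at *
  generalize eulerProd (s ^ 18) = e9 at *
  generalize eulerProd (s ^ 36) = e18 at *
  generalize altTheta (s ^ 2) = A at *
  generalize altTheta (s ^ 18) = A9 at *
  generalize triangularTheta s = B at *
  generalize triangularTheta (s ^ 9) = B9 at *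
  generalize oddProd (s ^ 6) = O3 at *
  generalize oddProd (s ^ 18) = O9 at *
  generalize plusProd (s ^ 6) = P3 at *
  generalize plusProd (s ^ 18) = P9 at *
  generalize c τ = c at *
  generalize s ^ 2 = x at *
  have hc : c * e9 ^ 2 = x * T * e18 ^ 2 := by
    rw [← hO9]
    linear_combination e18 ^ 2 * hcO
  have hTe : T * e9 * e6 = e3 * e18 := by
    rw [← hO9, ← hO3]
    linear_combination e18 * e6 * hT
  have hUe : U * e3 * e18 = e9 * e6 := by
    rw [← hP9, ← hP3]
    linear_combination e9 * e3 * hU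
  have hTU : T * U = 1 := by
    refine mul_right_cancel₀ (mul_ne_zero (mul_ne_zero n9 n6) (mul_ne_zero n3 n18)) ?_
    linear_combination (U * e3 * e18) * hTe + (e3 * e18) * hUe
  have hc1 : (1 - 2 * c) * (e2 * e9 ^ 2) = e1 ^ 2 * e18 := by
    linear_combination -2 * e2 * hc - e2 * e18 * hd + e18 * hA - e2 * hA9
  have hB' : e2 ^ 2 * e9 = x * e18 ^ 2 * e1 + e9 ^ 2 * U * e1 := by
    linear_combination (e1 * e9 * hd' - e9 * hB + x * e1 * hB9) / 2
  have hc2 : (1 + c) * (x * e1 * e18 ^ 2) = c * e2 ^ 2 * e9 := by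
    linear_combination -c * hB' - U * e1 * hc - x * e18 ^ 2 * e1 * hTU
  refine mul_right_cancel₀ (mul_ne_zero (mul_ne_zero n1 (pow_ne_zero 2 n18))
    (mul_ne_zero (pow_ne_zero 2 n2) n9)) ?_
  linear_combination ((1 - 2 * c) * (e2 * e9 ^ 2) + e1 ^ 2 * e18) * (1 + c) * (x * e1 * e18 ^ 2) *
    hc1 + (e1 ^ 2 * e18) ^ 2 * hc2

lemma dedekindEta_eq_eta (τ : ℂ) : dedekindEta τ = ModularForm.eta τ := by
  rw [dedekindEta, ModularForm.eta, Function.Periodic.qParam]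
  congr 1
  · congr 1
    push_cast
    ring
  · exact tprod_congr fun n ↦ by rw [ModularForm.eta_q_eq_cexp]

lemma dedekindEta_eq_eulerProd (τ : ℂ) :
    dedekindEta τ = cexp (Real.pi * I * τ / 12) * eulerProd (nome τ) := by
  rw [dedekindEta, eulerProd]
  congr 1
  refine tprod_congr fun n ↦ ?_
  rw [nome, ← Complex.exp_nat_mul]
  congr 2
  push_cast
  ring

lemma beta_neg_one_div {τ : ℂ} (hτ : 0 < τ.im) :
    beta (-1 / τ) = 3 + 27 * (dedekindEta (3 * τ) ^ 3 / dedekindEta (τ / 3) ^ 3) := by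
  have h0 : τ ≠ 0 := by
    rintro rfl
    simp at hτ
  have hd : 0 < (τ / 3).im := by
    rw [show τ / 3 = ((3⁻¹ : ℝ) : ℂ) * τ by push_cast; ring, Complex.im_ofReal_mul]
    positivity
  have hm : 0 < (3 * τ).im := by
    rw [show 3 * τ = ((3 : ℝ) : ℂ) * τ by push_cast; ring, Complex.im_ofReal_mul]
    positivity
  have e1 := ModularForm.eta_comp_eq_csqrt_I_inv (x := 3 * τ) hm
  have e2 := ModularForm.eta_comp_eq_csqrt_I_inv (x := τ / 3) hd
  have hη := ModularForm.eta_ne_zero (z := τ / 3) hd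
  have hI : Complex.sqrt I ≠ 0 := by simp [Complex.sqrt]
  have hs : Complex.sqrt (τ / 3) ≠ 0 := by simp [Complex.sqrt, h0]
  have h3 : τ / 3 ≠ 0 := div_ne_zero h0 three_ne_zero
  have hs9 : Complex.sqrt (3 * τ) = 3 * Complex.sqrt (τ / 3) := by
    have h9 : ((9 : ℝ) : ℂ) ^ (2⁻¹ : ℂ) = 3 := by
      rw [show ((9 : ℝ) : ℂ) = 3 ^ 2 by norm_num]
      exact Complex.sq_cpow_two_inv (by norm_num)
    rw [Complex.sqrt, Complex.sqrt, show 3 * τ = ((9 : ℝ) : ℂ) * (τ / 3) by push_cast; ring,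
      Complex.cpow_def_of_ne_zero (mul_ne_zero (by norm_num) h3),
      Complex.log_ofReal_mul (by norm_num) h3, add_mul, Complex.exp_add, Complex.ofReal_log (by norm_num),
      ← Complex.cpow_def_of_ne_zero (by norm_num), ← Complex.cpow_def_of_ne_zero h3, h9]
  simp only [Function.comp_apply, Pi.smul_apply, Pi.mul_apply, smul_eq_mul] at e1 e2
  rw [beta, dedekindEta_eq_eta, dedekindEta_eq_eta, dedekindEta_eq_eta, dedekindEta_eq_eta,
    show -1 / τ / 3 = -1 / (3 * τ) by field_simp, show 3 * (-1 / τ) = -1 / (τ / 3) by field_simp,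
    e1, e2, hs9]
  field_simp
  ring

/-- For `τ` in the upper half-plane,
`β(−1/τ)(2c(τ) − 1)²(c(τ) + 1) = 3(4c(τ)³ + 6c(τ) + 1)`. -/
theorem beta_inversion_cubicCF (τ : ℂ) (hτ : 0 < τ.im) :
    beta (-1 / τ) * (2 * c τ - 1) ^ 2 * (c τ + 1) = 3 * (4 * c τ ^ 3 + 6 * c τ + 1) := by
  have h := c_eulerProd_identity hτ
  have hx1 : ‖nome (τ / 3)‖ < 1 := by
    have : (2 * Real.pi * I * (τ / 3)).re = -(2 * Real.pi / 3 * τ.im) := by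
      rw [show 2 * Real.pi * I * (τ / 3) = ((2 * Real.pi / 3 : ℝ) : ℂ) * (I * τ) by
        push_cast; ring, Complex.re_ofReal_mul]
      simp
    rw [nome, Complex.norm_exp, Real.exp_lt_one_iff, this, neg_lt_zero]
    positivity
  have hx : cexp (2 * Real.pi * I * τ / 3) = nome (τ / 3) := by rw [nome]; ring_nf
  have hx9 : nome (3 * τ) = nome (τ / 3) ^ 9 := by
    rw [nome, nome, ← Complex.exp_nat_mul]; congr 1; push_cast; ring
  have hE := eulerProd_ne_zero hx1
  have hexp : cexp (Real.pi * I * (3 * τ) / 12) ^ 3 =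
      nome (τ / 3) * cexp (Real.pi * I * (τ / 3) / 12) ^ 3 := by
    rw [nome, ← Complex.exp_nat_mul, ← Complex.exp_nat_mul, ← Complex.exp_add]
    congr 1; push_cast; ring
  have hexp0 := Complex.exp_ne_zero (Real.pi * I * (τ / 3) / 12)
  rw [hx] at h
  rw [beta_neg_one_div hτ, dedekindEta_eq_eulerProd, dedekindEta_eq_eulerProd, mul_pow, mul_pow,
    hexp, hx9]
  have hr : nome (τ / 3) * cexp (Real.pi * I * (τ / 3) / 12) ^ 3 * eulerProd (nome (τ / 3) ^ 9) ^ 3 /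
      (cexp (Real.pi * I * (τ / 3) / 12) ^ 3 * eulerProd (nome (τ / 3)) ^ 3) =
      nome (τ / 3) * eulerProd (nome (τ / 3) ^ 9) ^ 3 / eulerProd (nome (τ / 3)) ^ 3 := by
    field_simp
  have hk : (2 * c τ - 1) ^ 2 * (c τ + 1) *
      (nome (τ / 3) * eulerProd (nome (τ / 3) ^ 9) ^ 3 / eulerProd (nome (τ / 3)) ^ 3) = c τ := by
    rw [← mul_div_assoc, h]
    field_simp
  rw [hr]
  linear_combination 27 * hk
end

section
/- For every τ in the complex upper half-plane, β(2τ)·c(τ)² = 1 − 2c(τ)³; equivalently β(2τ) = 1/c(τ)² − 2c(τ). -/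
open Complex

open Filter Topology

/-- The infinite `q`-Pochhammer symbol `(x; q)_∞ = ∏_{n ≥ 0} (1 - x q^n)`. -/
noncomputable def qPochInf (x q : ℂ) : ℂ := ∏' n : ℕ, (1 - x * q ^ n)

/-- The two-sided theta series `∑_{n ∈ ℤ} q^{n²} z^n`. -/
noncomputable def thetaSeries (q z : ℂ) : ℂ := ∑' n : ℤ, q ^ (n ^ 2) * z ^ n

/-- The finite `q`-Pochhammer symbol `(q; q)_n = ∏_{1 ≤ i ≤ n} (1 - q^i)`. -/
noncomputable def qFact (q : ℂ) (n : ℕ) : ℂ := ∏ i ∈ Finset.range n, (1 - q * q ^ i)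

/-- The Gaussian binomial coefficient, defined through the `q`-Pascal recursion. -/
noncomputable def gaussBinom (q : ℂ) : ℕ → ℕ → ℂ
  | _, 0 => 1
  | 0, _ + 1 => 0
  | n + 1, k + 1 => gaussBinom q n k + q ^ (k + 1) * gaussBinom q n (k + 1)

section qPochhammer

variable {x q : ℂ}

lemma norm_pow_lt_one_of_ne_zero (hq : ‖q‖ < 1) {n : ℕ} (hn : n ≠ 0) : ‖q ^ n‖ < 1 := by
  rw [norm_pow]
  exact pow_lt_one₀ (norm_nonneg _) hq hn

lemma summable_norm_mul_pow (hq : ‖q‖ < 1) : Summable fun n : ℕ ↦ ‖-(x * q ^ n)‖ := by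
  simpa [norm_mul, norm_pow] using
    (summable_geometric_of_lt_one (norm_nonneg q) hq).mul_left ‖x‖

lemma multipliable_one_sub_mul_pow (hq : ‖q‖ < 1) :
    Multipliable fun n : ℕ ↦ 1 - x * q ^ n := by
  simpa [sub_eq_add_neg] using multipliable_one_add_of_summable (summable_norm_mul_pow (x := x) hq)

lemma tendsto_prod_qPochInf (hq : ‖q‖ < 1) :
    Tendsto (fun N ↦ ∏ i ∈ Finset.range N, (1 - x * q ^ i)) atTop (𝓝 (qPochInf x q)) :=
  (multipliable_one_sub_mul_pow hq).tendsto_prod_tprod_nat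

lemma one_sub_mul_pow_ne_zero (hx : ‖x‖ < 1) (hq : ‖q‖ < 1) (n : ℕ) : 1 - x * q ^ n ≠ 0 := by
  intro h
  have h1 : ‖x * q ^ n‖ < 1 := by
    rw [norm_mul, norm_pow]
    exact (mul_le_of_le_one_right (norm_nonneg _)
      (pow_le_one₀ (norm_nonneg _) hq.le)).trans_lt hx
  rw [← sub_eq_zero.mp h] at h1
  simp at h1

lemma qPochInf_ne_zero (hx : ‖x‖ < 1) (hq : ‖q‖ < 1) : qPochInf x q ≠ 0 := by
  have := tprod_one_add_ne_zero_of_summable (f := fun n : ℕ ↦ -(x * q ^ n))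
    (fun n ↦ by simpa [sub_eq_add_neg] using one_sub_mul_pow_ne_zero hx hq n)
    (summable_norm_mul_pow hq)
  simpa [qPochInf, sub_eq_add_neg] using this

lemma qPochInf_eq_prod (x : ℂ) (hq : ‖q‖ < 1) {m : ℕ} (hm : m ≠ 0) :
    qPochInf x q = ∏ j ∈ Finset.range m, qPochInf (x * q ^ j) (q ^ m) := by
  have hqm : ‖q ^ m‖ < 1 := norm_pow_lt_one_of_ne_zero hq hm
  have h1 : Tendsto (fun N ↦ ∏ i ∈ Finset.range (N * m), (1 - x * q ^ i)) atTop
      (𝓝 (qPochInf x q)) :=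
    (tendsto_prod_qPochInf hq).comp (tendsto_id.atTop_mul_const' (Nat.pos_of_ne_zero hm))
  have h2 : Tendsto (fun N ↦ ∏ j ∈ Finset.range m,
      ∏ i ∈ Finset.range N, (1 - x * q ^ j * (q ^ m) ^ i)) atTop
      (𝓝 (∏ j ∈ Finset.range m, qPochInf (x * q ^ j) (q ^ m))) :=
    tendsto_finsetProd _ fun j _ ↦ tendsto_prod_qPochInf hqm
  refine tendsto_nhds_unique h1 (h2.congr fun N ↦ ?_)
  rw [Finset.prod_comm]
  induction N with
  | zero => simp
  | succ N ih =>
    rw [Finset.prod_range_succ, ih, add_mul, one_mul, Finset.prod_range_add]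
    congr 1
    refine Finset.prod_congr rfl fun j _ ↦ ?_
    ring

lemma qPochInf_mul_neg (x : ℂ) (hq : ‖q‖ < 1) :
    qPochInf x q * qPochInf (-x) q = qPochInf (x ^ 2) (q ^ 2) := by
  rw [qPochInf, qPochInf, qPochInf, ← (multipliable_one_sub_mul_pow hq).tprod_mul
    (multipliable_one_sub_mul_pow hq)]
  congr 1 with n
  ring

lemma qPochInf_eq_one_sub_mul (x : ℂ) (hq : ‖q‖ < 1) :
    qPochInf x q = (1 - x) * qPochInf (x * q) q := by
  refine tendsto_nhds_unique ((tendsto_prod_qPochInf hq).comp (tendsto_add_atTop_nat 1))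
    (((tendsto_prod_qPochInf hq).const_mul (1 - x)).congr fun N ↦ ?_)
  simp only [Function.comp_apply, Finset.prod_range_succ']
  simp only [pow_zero, mul_one, mul_comm (1 - x)]
  congr 1
  refine Finset.prod_congr rfl fun j _ ↦ ?_
  ring

/-- Euler's identity `(-q; q)_∞ (q; q²)_∞ = 1`. -/
lemma qPochInf_neg_self_mul (hq : ‖q‖ < 1) : qPochInf (-q) q * qPochInf q (q ^ 2) = 1 := by
  have hq2 : ‖q ^ 2‖ < 1 := norm_pow_lt_one_of_ne_zero hq two_ne_zero
  have h1 := qPochInf_eq_prod q hq two_ne_zero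
  have h2 := qPochInf_mul_neg q hq
  have h3 := qPochInf_ne_zero hq hq
  have h4 := qPochInf_ne_zero hq2 hq2
  simp only [Finset.prod_range_succ, Finset.prod_range_zero, one_mul, pow_zero, mul_one,
    pow_one, ← sq] at h1
  apply mul_left_cancel₀ h4
  linear_combination h2 - qPochInf (-q) q * h1

end qPochhammer

section JacobiTripleProduct

variable {q : ℂ}

lemma gaussBinom_eq_zero (q : ℂ) : ∀ {n k : ℕ}, n < k → gaussBinom q n k = 0
  | 0, k + 1, _ => by simp [gaussBinom]
  | n + 1, k + 1, h => by
    rw [gaussBinom, gaussBinom_eq_zero q (by omega : n < k),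
      gaussBinom_eq_zero q (by omega : n < k + 1), mul_zero, add_zero]

lemma gaussBinom_self (q : ℂ) (n : ℕ) : gaussBinom q n n = 1 := by
  induction n with
  | zero => simp [gaussBinom]
  | succ n ih => rw [gaussBinom, ih, gaussBinom_eq_zero q n.lt_succ_self, mul_zero, add_zero]

lemma gaussBinom_mul_qFact (q : ℂ) : ∀ n k : ℕ,
    gaussBinom q (n + k) k * (qFact q k * qFact q n) = qFact q (n + k)
  | n, 0 => by simp [gaussBinom, qFact]
  | 0, k + 1 => by simp [gaussBinom_self, qFact]
  | n + 1, k + 1 => by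
    have h1 := gaussBinom_mul_qFact q (n + 1) k
    have h2 := gaussBinom_mul_qFact q n (k + 1)
    rw [show n + 1 + (k + 1) = (n + 1 + k) + 1 by ring, gaussBinom]
    rw [show n + (k + 1) = n + 1 + k by ring] at h2
    have e (m : ℕ) : qFact q (m + 1) = qFact q m * (1 - q ^ (m + 1)) := by
      rw [qFact, Finset.prod_range_succ, pow_succ']; rfl
    rw [e (n + 1 + k)]
    rw [e n] at h1 ⊢
    rw [e k] at h2 ⊢
    linear_combination (1 - q ^ (k + 1)) * h1 + q ^ (k + 1) * (1 - q ^ (n + 1)) * h2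
termination_by n k => n + k

/-- The `q`-binomial theorem. -/
lemma prod_one_add_mul_pow (q : ℂ) (M : ℕ) : ∀ x : ℂ, ∏ i ∈ Finset.range M, (1 + x * q ^ i) =
    ∑ k ∈ Finset.range (M + 1), gaussBinom q M k * q ^ (k.choose 2) * x ^ k := by
  induction M with
  | zero => simp [gaussBinom]
  | succ M ih =>
    intro x
    have h1 : ∏ i ∈ Finset.range (M + 1), (1 + x * q ^ i) =
        (1 + x) * ∏ i ∈ Finset.range M, (1 + x * q * q ^ i) := by
      rw [Finset.prod_range_succ', pow_zero, mul_one, mul_comm]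
      congr 1
      exact Finset.prod_congr rfl fun i _ ↦ by ring
    rw [h1, ih, add_mul, one_mul]
    conv_lhs => enter [1]; rw [Finset.sum_range_succ']
    rw [Finset.sum_range_succ' _ (M + 1), Finset.mul_sum]
    have h2 : ∑ k ∈ Finset.range M,
          gaussBinom q M (k + 1) * q ^ (k + 1).choose 2 * (x * q) ^ (k + 1) =
        ∑ k ∈ Finset.range (M + 1),
          gaussBinom q M (k + 1) * q ^ (k + 1).choose 2 * (x * q) ^ (k + 1) := by
      rw [Finset.sum_range_succ, gaussBinom_eq_zero q M.lt_succ_self]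
      simp
    rw [h2, add_right_comm, ← Finset.sum_add_distrib]
    congr 1
    · refine Finset.sum_congr rfl fun k _ ↦ ?_
      have : (k + 1).choose 2 = k + k.choose 2 := by simp [Nat.choose_succ_succ' k 1]
      rw [gaussBinom, this]
      ring
    · simp [gaussBinom]

lemma prod_mul_prod_eq_sum (hq0 : q ≠ 0) {z : ℂ} (hz : z ≠ 0) (N : ℕ) :
    (∏ i ∈ Finset.range N, (1 - -(z * q) * (q ^ 2) ^ i)) *
      ∏ i ∈ Finset.range N, (1 - -(z⁻¹ * q) * (q ^ 2) ^ i) =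
    ∑ k ∈ Finset.range (2 * N + 1), gaussBinom (q ^ 2) (2 * N) k *
      (q ^ (((k : ℤ) - N) ^ 2) * z ^ ((k : ℤ) - N)) := by
  have key := prod_one_add_mul_pow (q ^ 2) (2 * N) (z * q ^ (1 - 2 * (N : ℤ)))
  have hsplit : ∏ i ∈ Finset.range (2 * N), (1 + z * q ^ (1 - 2 * (N : ℤ)) * (q ^ 2) ^ i) =
      z ^ N * q ^ (-(N : ℤ) ^ 2) * ((∏ i ∈ Finset.range N, (1 - -(z * q) * (q ^ 2) ^ i)) *
      ∏ i ∈ Finset.range N, (1 - -(z⁻¹ * q) * (q ^ 2) ^ i)) := by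
    have hodd : ∏ i ∈ Finset.range N, (z * q ^ (-(2 * (i : ℤ) + 1))) =
        z ^ N * q ^ (-(N : ℤ) ^ 2) := by
      clear key
      induction N with
      | zero => simp
      | succ N ih =>
        rw [Finset.prod_range_succ, ih, pow_succ, mul_mul_mul_comm, ← zpow_add₀ hq0]
        congr 2
        push_cast
        ring
    rw [← hodd, two_mul, Finset.prod_range_add, mul_left_comm, mul_comm]
    congr 1
    · refine Finset.prod_congr rfl fun i _ ↦ ?_
      have : q ^ (1 - 2 * (N : ℤ)) * (q ^ 2) ^ (N + i) = q * (q ^ 2) ^ i := by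
        rw [← pow_mul, ← pow_mul, ← zpow_natCast, ← zpow_natCast, ← zpow_add₀ hq0,
          ← zpow_one_add₀ hq0]
        congr 1
        push_cast
        ring
      rw [mul_assoc, this]
      ring
    · rw [← Finset.prod_mul_distrib]
      refine (Finset.prod_range_reflect _ N).symm.trans (Finset.prod_congr rfl fun i hi ↦ ?_)
      have hi' := Finset.mem_range.mp hi
      have e1 : q ^ (1 - 2 * (N : ℤ)) * (q ^ 2) ^ (N - 1 - i) = q ^ (-(2 * (i : ℤ) + 1)) := by
        rw [← pow_mul, ← zpow_natCast, ← zpow_add₀ hq0]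
        congr 1
        rw [Nat.cast_mul, Nat.sub_sub, Nat.cast_sub (by omega)]
        push_cast
        ring
      have e2 : q ^ (-(2 * (i : ℤ) + 1)) * (q * (q ^ 2) ^ i) = 1 := by
        rw [← pow_mul, ← zpow_natCast, ← zpow_one_add₀ hq0, ← zpow_add₀ hq0]
        convert zpow_zero q using 2
        push_cast
        ring
      rw [mul_assoc, e1]
      linear_combination -e2 * z * z⁻¹ - mul_inv_cancel₀ hz
  rw [hsplit] at key
  have hne : z ^ N * q ^ (-(N : ℤ) ^ 2) ≠ 0 := mul_ne_zero (pow_ne_zero _ hz) (zpow_ne_zero _ hq0)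
  apply mul_left_cancel₀ hne
  rw [key, Finset.mul_sum]
  refine Finset.sum_congr rfl fun k _ ↦ ?_
  have hc : ((k.choose 2 : ℕ) : ℤ) * 2 = k * (k - 1) := by
    rcases k with _ | k
    · simp
    · have := Nat.choose_two_right (k + 1)
      have h2 : (k + 1).choose 2 * 2 = (k + 1) * k := by
        rw [this, Nat.add_sub_cancel]
        exact Nat.div_mul_cancel (by simpa [mul_comm] using (Nat.even_mul_succ_self k).two_dvd)
      have h3 : (((k + 1).choose 2 : ℕ) : ℤ) * 2 = (k + 1) * k := by exact_mod_cast h2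
      rw [h3]
      push_cast
      ring
  have e1 : (q ^ 2) ^ k.choose 2 * (z * q ^ (1 - 2 * (N : ℤ))) ^ k =
      q ^ ((k : ℤ) * (k - 1) + (1 - 2 * N) * k) * z ^ k := by
    rw [mul_pow, ← zpow_natCast (q ^ (1 - 2 * (N : ℤ))), ← zpow_mul, zpow_add₀ hq0, ← hc,
      ← pow_mul, ← zpow_natCast q]
    push_cast
    ring_nf
  have e2 : z ^ N * z ^ ((k : ℤ) - N) = z ^ k := by
    rw [← zpow_natCast, ← zpow_natCast, ← zpow_add₀ hz]
    congr 1
    ring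
  have e3 : q ^ (-(N : ℤ) ^ 2) * q ^ (((k : ℤ) - N) ^ 2) =
      q ^ ((k : ℤ) * (k - 1) + (1 - 2 * N) * k) := by
    rw [← zpow_add₀ hq0]
    congr 1
    ring
  rw [mul_assoc, e1, ← e2, ← e3]
  ring

lemma summable_thetaSeries (hq0 : q ≠ 0) (hq : ‖q‖ < 1) {z : ℂ} (hz : z ≠ 0) :
    Summable fun n : ℤ ↦ q ^ (n ^ 2) * z ^ n := by
  have hpi : (Real.pi : ℂ) ≠ 0 := by exact_mod_cast Real.pi_ne_zero
  have hτ : 0 < (Complex.log q / (Real.pi * I)).im := by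
    have h : Complex.log q / (Real.pi * I) = -(Complex.log q * I) / Real.pi := by
      field_simp
      simp
    rw [h, div_ofReal_im]
    have : Real.log ‖q‖ < 0 := Real.log_neg (norm_pos_iff.mpr hq0) hq
    simp only [neg_im, mul_im, I_re, I_im, mul_zero, mul_one, log_re, add_zero]
    have := Real.pi_pos
    apply div_pos <;> linarith
  refine ((summable_jacobiTheta₂_term_iff (Complex.log z / (2 * Real.pi * I)) _).mpr hτ).congr
    fun n ↦ ?_
  have e1 : 2 * Real.pi * I * n * (Complex.log z / (2 * Real.pi * I)) = n * Complex.log z := by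
    field_simp [I_ne_zero]
  have e2 : Real.pi * I * n ^ 2 * (Complex.log q / (Real.pi * I)) =
      ((n ^ 2 : ℤ) : ℂ) * Complex.log q := by
    push_cast
    field_simp [I_ne_zero]
  rw [jacobiTheta₂_term, e1, e2, Complex.exp_add, Complex.exp_int_mul, Complex.exp_int_mul,
    Complex.exp_log hq0, Complex.exp_log hz, mul_comm]

lemma qFact_ne_zero (hq : ‖q‖ < 1) (n : ℕ) : qFact q n ≠ 0 :=
  Finset.prod_ne_zero_iff.mpr fun i _ ↦ one_sub_mul_pow_ne_zero hq hq i

lemma gaussBinom_eq_div (hq : ‖q‖ < 1) (n k : ℕ) :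
    gaussBinom q (n + k) k = qFact q (n + k) / (qFact q k * qFact q n) :=
  (eq_div_iff (mul_ne_zero (qFact_ne_zero hq k) (qFact_ne_zero hq n))).mpr
    (gaussBinom_mul_qFact q n k)

lemma exists_norm_gaussBinom_le (hq : ‖q‖ < 1) : ∃ C, ∀ n k, ‖gaussBinom q n k‖ ≤ C := by
  have ht : Tendsto (qFact q) atTop (𝓝 (qPochInf q q)) := tendsto_prod_qPochInf hq
  obtain ⟨A, hA⟩ := (Metric.isBounded_range_of_tendsto _ ht).exists_norm_le
  obtain ⟨B, hB⟩ := (Metric.isBounded_range_of_tendsto _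
    (ht.inv₀ (qPochInf_ne_zero hq hq))).exists_norm_le
  have hA' n : ‖qFact q n‖ ≤ A := hA _ ⟨n, rfl⟩
  have hB' n : ‖(qFact q n)⁻¹‖ ≤ B := hB _ ⟨n, rfl⟩
  have hA0 : 0 ≤ A := (norm_nonneg _).trans (hA' 0)
  have hB0 : 0 ≤ B := (norm_nonneg _).trans (hB' 0)
  refine ⟨A * (B * B), fun n k ↦ ?_⟩
  rcases lt_or_ge n k with h | h
  · rw [gaussBinom_eq_zero q h, norm_zero]
    positivity
  · obtain ⟨m, rfl⟩ := Nat.exists_eq_add_of_le' h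
    rw [gaussBinom_eq_div hq, div_eq_mul_inv, mul_inv, norm_mul, norm_mul]
    exact mul_le_mul (hA' _) (mul_le_mul (hB' _) (hB' _) (norm_nonneg _) hB0) (by positivity) hA0

lemma tendsto_gaussBinom (hq : ‖q‖ < 1) (k : ℤ) :
    Tendsto (fun N : ℕ ↦ gaussBinom q (2 * N) (k + N).toNat) atTop (𝓝 (qPochInf q q)⁻¹) := by
  have ht : Tendsto (qFact q) atTop (𝓝 (qPochInf q q)) := tendsto_prod_qPochInf hq
  have hne := qPochInf_ne_zero hq hq
  have h1 : Tendsto (fun N : ℕ ↦ 2 * N) atTop atTop :=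
    tendsto_atTop_mono (fun N ↦ by simp only [id]; omega) tendsto_id
  have hs (j : ℤ) : Tendsto (fun N : ℕ ↦ (j + N).toNat) atTop atTop := by
    refine tendsto_atTop.mpr fun b ↦ ?_
    filter_upwards [eventually_ge_atTop (b + j.natAbs)] with N hN
    omega
  have := (ht.comp h1).div ((ht.comp (hs k)).mul (ht.comp (hs (-k)))) (mul_ne_zero hne hne)
  rw [div_mul_cancel_left₀ hne] at this
  refine this.congr' ?_
  filter_upwards [eventually_ge_atTop k.natAbs] with N hN
  have e : 2 * N = (-k + N).toNat + (k + N).toNat := by omega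
  simp only [Function.comp_apply, Pi.div_apply]
  rw [e, gaussBinom_eq_div hq]

/-- The Jacobi triple product identity. -/
theorem thetaSeries_eq_prod (hq0 : q ≠ 0) (hq : ‖q‖ < 1) {z : ℂ} (hz : z ≠ 0) :
    thetaSeries q z =
      qPochInf (q ^ 2) (q ^ 2) * qPochInf (-(z * q)) (q ^ 2) * qPochInf (-(z⁻¹ * q)) (q ^ 2) := by
  have hq2 : ‖q ^ 2‖ < 1 := norm_pow_lt_one_of_ne_zero hq two_ne_zero
  let T (N : ℕ) (k : ℤ) : ℂ := if 0 ≤ k + N then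
    gaussBinom (q ^ 2) (2 * N) (k + N).toNat * (q ^ (k ^ 2) * z ^ k) else 0
  obtain ⟨C, hC⟩ := exists_norm_gaussBinom_le hq2
  have hC0 : 0 ≤ C := (norm_nonneg _).trans (hC 0 0)
  have hsum := summable_thetaSeries hq0 hq hz
  have hT : Tendsto (fun N ↦ ∑' k, T N k) atTop
      (𝓝 (∑' k : ℤ, (qPochInf (q ^ 2) (q ^ 2))⁻¹ * (q ^ (k ^ 2) * z ^ k))) := by
    refine tendsto_tsum_of_dominated_convergence (hsum.norm.mul_left C) (fun k ↦ ?_)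
      (.of_forall fun N k ↦ ?_)
    · refine ((tendsto_gaussBinom hq2 k).mul_const _).congr' ?_
      filter_upwards [eventually_ge_atTop k.natAbs] with N hN
      exact (if_pos (by omega)).symm
    · simp only [T]
      split_ifs
      · rw [norm_mul]
        gcongr
        exact hC _ _
      · rw [norm_zero]
        positivity
  have hTN N : ∑' k, T N k = (∏ i ∈ Finset.range N, (1 - -(z * q) * (q ^ 2) ^ i)) *
      ∏ i ∈ Finset.range N, (1 - -(z⁻¹ * q) * (q ^ 2) ^ i) := by
    have hinj : Function.Injective fun j : ℕ ↦ (j : ℤ) - N := fun a b h ↦ by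
      simpa using h
    rw [prod_mul_prod_eq_sum hq0 hz, ← hinj.tsum_eq, tsum_eq_sum (s := Finset.range (2 * N + 1))]
    · exact Finset.sum_congr rfl fun j _ ↦ by simp [T]
    · intro j hj
      simp [T, gaussBinom_eq_zero (q ^ 2) (by simpa using hj : 2 * N < j)]
    · intro k hk
      have : 0 ≤ k + N := by
        by_contra h
        exact hk (if_neg h)
      exact ⟨(k + N).toNat, by simp only; omega⟩
  have := tendsto_nhds_unique (hT.congr hTN)
    ((tendsto_prod_qPochInf hq2).mul (tendsto_prod_qPochInf hq2))
  rw [tsum_mul_left, inv_mul_eq_iff_eq_mul₀ (qPochInf_ne_zero hq2 hq2)] at this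
  rw [thetaSeries, this, mul_assoc]

end JacobiTripleProduct

lemma tsum_int_eq_add_mod_three {f : ℤ → ℂ} (hf : Summable f) :
    ∑' n, f n = ∑' m, f (3 * m) + ∑' m, f (3 * m + 1) + ∑' m, f (-(3 * m + 1)) := by
  have hi (a b : ℤ) (ha : a ≠ 0) : Summable fun m ↦ f (a * m + b) :=
    hf.comp_injective fun x y h ↦ by simpa [ha] using h
  have h : ∑' m, f (-(3 * m + 1)) = ∑' m, f (3 * m + 2) := by
    rw [← (Equiv.subLeft (-1 : ℤ)).tsum_eq]
    congr 1 with m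
    congr 1
    simp only [Equiv.subLeft_apply]
    ring
  have hp : Summable fun p : ℤ × Fin 3 ↦ f ((Int.divModEquiv 3).symm p) :=
    (Int.divModEquiv 3).symm.summable_iff.mpr hf
  rw [h, ← (Int.divModEquiv 3).symm.tsum_eq, hp.tsum_prod,
    ← (by simpa using hi 3 0 (by simp) : Summable fun m ↦ f (3 * m)).tsum_add (hi 3 1 (by simp)),
    ← Summable.tsum_add _ (hi 3 2 (by simp))]
  · congr 1 with m
    rw [tsum_fintype, Fin.sum_univ_three]
    simp [Int.divModEquiv, mul_comm]
  · exact (by simpa using hi 3 0 (by simp) : Summable fun m ↦ f (3 * m)).add (hi 3 1 (by simp))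

section CubicDissection

variable {t : ℂ}

/-- The 3-dissection of `φ(-t) = ∑ (-1)^n t^{n²}`. -/
lemma thetaSeries_neg_one (ht0 : t ≠ 0) (ht : ‖t‖ < 1) :
    thetaSeries t (-1) = thetaSeries (t ^ 9) (-1) - 2 * t * thetaSeries (t ^ 9) (-t ^ 6) := by
  have hneg (m : ℤ) : (-1 : ℂ) ^ (3 * m) = (-1) ^ m := by
    rw [zpow_mul]
    norm_num
  have h1 : ∑' m : ℤ, t ^ ((3 * m) ^ 2) * (-1 : ℂ) ^ (3 * m) = thetaSeries (t ^ 9) (-1) := by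
    congr 1 with m
    rw [hneg, ← zpow_natCast t, ← zpow_mul]
    congr 2
    push_cast
    ring
  have h2 : ∑' m : ℤ, t ^ ((3 * m + 1) ^ 2) * (-1 : ℂ) ^ (3 * m + 1) =
      -t * thetaSeries (t ^ 9) (-t ^ 6) := by
    rw [thetaSeries, ← tsum_mul_left]
    congr 1 with m
    rw [zpow_add₀ (by norm_num : (-1 : ℂ) ≠ 0), hneg, neg_eq_neg_one_mul (t ^ 6), mul_zpow,
      ← zpow_natCast t, ← zpow_natCast t, ← zpow_mul, ← zpow_mul,
      show (3 * m + 1) ^ 2 = ((9 : ℕ) : ℤ) * m ^ 2 + ((6 : ℕ) : ℤ) * m + 1 by push_cast; ring,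
      zpow_add₀ ht0, zpow_add₀ ht0, zpow_one, zpow_one]
    ring
  have h3 : ∑' m : ℤ, t ^ ((-(3 * m + 1)) ^ 2) * (-1 : ℂ) ^ (-(3 * m + 1)) =
      ∑' m : ℤ, t ^ ((3 * m + 1) ^ 2) * (-1 : ℂ) ^ (3 * m + 1) := by
    congr 1 with m
    rw [neg_sq, ← inv_zpow', inv_neg_one]
  rw [thetaSeries, tsum_int_eq_add_mod_three (summable_thetaSeries ht0 ht (by norm_num)), h3, h1,
    h2]
  ring

/-- The 3-dissection of `2ψ(s²) = ∑ s^{n² + n}`. -/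
lemma thetaSeries_self {s : ℂ} (hs0 : s ≠ 0) (hs : ‖s‖ < 1) :
    thetaSeries s s = s ^ 2 * thetaSeries (s ^ 9) (s ^ 9) + 2 * thetaSeries (s ^ 9) (s ^ 3) := by
  have h1 : ∑' m : ℤ, s ^ ((3 * m) ^ 2) * s ^ (3 * m) = thetaSeries (s ^ 9) (s ^ 3) := by
    congr 1 with m
    rw [← zpow_natCast s, ← zpow_natCast s, ← zpow_mul, ← zpow_mul]
    push_cast
    ring_nf
  have h2 : ∑' m : ℤ, s ^ ((3 * m + 1) ^ 2) * s ^ (3 * m + 1) =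
      s ^ 2 * thetaSeries (s ^ 9) (s ^ 9) := by
    rw [thetaSeries, ← tsum_mul_left]
    congr 1 with m
    rw [← zpow_natCast s, ← zpow_natCast s, ← zpow_mul, ← zpow_mul, ← zpow_add₀ hs0,
      ← zpow_add₀ hs0, ← zpow_add₀ hs0]
    congr 1
    push_cast
    ring
  have h3 : ∑' m : ℤ, s ^ ((-(3 * m + 1)) ^ 2) * s ^ (-(3 * m + 1)) =
      ∑' m : ℤ, s ^ ((3 * m) ^ 2) * s ^ (3 * m) := by
    congr 1 with m
    rw [← zpow_add₀ hs0, ← zpow_add₀ hs0]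
    congr 1
    ring
  rw [thetaSeries, tsum_int_eq_add_mod_three (summable_thetaSeries hs0 hs hs0), h3, h1, h2]
  ring

lemma thetaSeries_neg_one_eq_prod (ht0 : t ≠ 0) (ht : ‖t‖ < 1) :
    thetaSeries t (-1) = qPochInf (t ^ 2) (t ^ 2) * qPochInf t (t ^ 2) ^ 2 := by
  rw [thetaSeries_eq_prod ht0 ht (by norm_num)]
  norm_num
  ring

lemma thetaSeries_self_eq_prod {s : ℂ} (hs0 : s ≠ 0) (hs : ‖s‖ < 1) :
    thetaSeries s s = 2 * qPochInf (s ^ 2) (s ^ 2) * qPochInf (-s ^ 2) (s ^ 2) ^ 2 := by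
  have hs2 : ‖s ^ 2‖ < 1 := norm_pow_lt_one_of_ne_zero hs two_ne_zero
  rw [thetaSeries_eq_prod hs0 hs hs0, inv_mul_cancel₀ hs0, qPochInf_eq_one_sub_mul (-1) hs2, ← sq,
    neg_one_mul]
  ring

lemma thetaSeries_sq_mul_thetaSeries {s : ℂ} (hs0 : s ≠ 0) (hs : ‖s‖ < 1) :
    thetaSeries s s ^ 2 * thetaSeries (s ^ 2) (-1) = 4 * qPochInf (s ^ 4) (s ^ 4) ^ 3 := by
  have hs2 : ‖s ^ 2‖ < 1 := norm_pow_lt_one_of_ne_zero hs two_ne_zero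
  have h1 := qPochInf_neg_self_mul hs2
  have h2 := qPochInf_mul_neg (s ^ 2) hs2
  rw [thetaSeries_self_eq_prod hs0 hs, thetaSeries_neg_one_eq_prod (pow_ne_zero 2 hs0) hs2]
  simp only [← pow_mul, Nat.reduceMul] at h1 h2 ⊢
  rw [← h2]
  linear_combination 4 * (qPochInf (s ^ 2) (s ^ 2) * qPochInf (-s ^ 2) (s ^ 2)) ^ 3 *
    (qPochInf (-s ^ 2) (s ^ 2) * qPochInf (s ^ 2) (s ^ 4) + 1) * h1

lemma two_mul_thetaSeries_mul_thetaSeries {s : ℂ} (hs0 : s ≠ 0) (hs : ‖s‖ < 1) :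
    2 * thetaSeries (s ^ 3) s * thetaSeries (s ^ 6) (-s ^ 4) =
      thetaSeries (s ^ 3) (s ^ 3) * thetaSeries (s ^ 6) (-1) := by
  have hn (n : ℕ) (h : n ≠ 0) : ‖s ^ n‖ < 1 := norm_pow_lt_one_of_ne_zero hs h
  have hG := thetaSeries_eq_prod (pow_ne_zero 3 hs0) (hn 3 (by norm_num)) hs0
  have hF := thetaSeries_eq_prod (pow_ne_zero 6 hs0) (hn 6 (by norm_num))
    (neg_ne_zero.mpr (pow_ne_zero 4 hs0))
  have e1 : s⁻¹ * s ^ 3 = s ^ 2 := by field_simp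
  have e2 : -((-s ^ 4)⁻¹ * s ^ 6) = s ^ 2 := by field_simp
  have e3 : -(s * s ^ 3) = -s ^ 4 := by ring
  have e4 : -(-s ^ 4 * s ^ 6) = s ^ 10 := by ring
  rw [e1, e3] at hG
  rw [e2, e4] at hF
  rw [hG, hF, thetaSeries_self_eq_prod (pow_ne_zero 3 hs0) (hn 3 (by norm_num)),
    thetaSeries_neg_one_eq_prod (pow_ne_zero 6 hs0) (hn 6 (by norm_num))]
  have E1 := qPochInf_neg_self_mul (hn 2 (by norm_num))
  have E3 := qPochInf_neg_self_mul (hn 6 (by norm_num))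
  have d1 := qPochInf_eq_prod (-s ^ 2) (hn 2 (by norm_num)) three_ne_zero
  have d2 := qPochInf_eq_prod (s ^ 2) (hn 4 (by norm_num)) three_ne_zero
  simp only [Finset.prod_range_succ, Finset.prod_range_zero, one_mul, mul_one,
    ← pow_mul, neg_mul, ← pow_add, Nat.reduceMul, Nat.reduceAdd] at E1 E3 d1 d2 ⊢
  rw [d1, d2] at E1
  generalize qPochInf (-s ^ 2) (s ^ 6) = a1 at *
  generalize qPochInf (-s ^ 4) (s ^ 6) = a2 at *
  generalize qPochInf (-s ^ 6) (s ^ 6) = a3 at *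
  generalize qPochInf (s ^ 2) (s ^ 12) = b1 at *
  generalize qPochInf (s ^ 6) (s ^ 12) = b3 at *
  generalize qPochInf (s ^ 10) (s ^ 12) = b5 at *
  generalize qPochInf (s ^ 6) (s ^ 6) = u at *
  generalize qPochInf (s ^ 12) (s ^ 12) = v at *
  linear_combination 2 * u * v * (E1 - (a1 * a2 * b1 * b5 + a3 * b3 + 1) * E3)

end CubicDissection

lemma dedekindEta_eq (τ : ℂ) :
    dedekindEta τ = Complex.exp (Real.pi * I * τ / 12) * qPochInf (nome τ) (nome τ) := by
  rw [dedekindEta, qPochInf]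
  congr 2 with n
  rw [nome, ← pow_succ', ← Complex.exp_nat_mul]
  push_cast
  ring_nf

lemma norm_nome_lt_one {τ : ℂ} (hτ : 0 < τ.im) : ‖nome τ‖ < 1 := by
  simpa [nome] using UpperHalfPlane.norm_exp_two_pi_I_lt_one ⟨τ, hτ⟩

lemma nome_pow (τ : ℂ) (n : ℕ) : nome τ ^ n = nome (n * τ) := by
  rw [nome, nome, ← Complex.exp_nat_mul]
  ring_nf

lemma c_eq {τ : ℂ} (hτ : 0 < τ.im) :
    c τ = nome (τ / 3) * (qPochInf (nome τ ^ 5) (nome τ ^ 6) * qPochInf (nome τ) (nome τ ^ 6) /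
      qPochInf (nome τ ^ 3) (nome τ ^ 6) ^ 2) := by
  have hn (n : ℕ) (h : n ≠ 0) : ‖nome τ ^ n‖ < 1 :=
    norm_pow_lt_one_of_ne_zero (norm_nome_lt_one hτ) h
  have h6 := hn 6 (by norm_num)
  have hm (x : ℂ) := multipliable_one_sub_mul_pow (x := x) h6
  have hne := pow_ne_zero 2 (qPochInf_ne_zero (hn 3 (by norm_num)) h6)
  have hsq : qPochInf (nome τ ^ 3) (nome τ ^ 6) ^ 2 =
      ∏' n : ℕ, (1 - nome τ ^ 3 * (nome τ ^ 6) ^ n) ^ 2 := ((hm _).tprod_pow 2).symm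
  rw [hsq] at hne ⊢
  rw [c, qPochInf, qPochInf, ← (hm _).tprod_mul (hm _),
    ← ((hm _).mul (hm _)).tprod_div₀ ((hm _).pow 2) hne]
  congr 1
  · rw [nome]
    ring_nf
  · congr 1 with n
    have e (j k : ℕ) (h : k + j = 6) : nome τ ^ (6 * (n + 1) - j) =
        nome τ ^ k * (nome τ ^ 6) ^ n := by
      rw [← pow_mul, ← pow_add]
      congr 1
      omega
    rw [e 1 5 rfl, e 5 1 rfl, e 3 3 rfl, pow_one]

/-- For `τ` in the upper half-plane, `β(2τ)c(τ)² = 1 − 2c(τ)³`. -/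
theorem beta_two_tau_cubicCF (τ : ℂ) (hτ : 0 < τ.im) :
    beta (2 * τ) * c τ ^ 2 = 1 - 2 * c τ ^ 3 := by
  have hs : ‖nome (τ / 6)‖ < 1 := norm_nome_lt_one (by simpa using hτ)
  have hs0 : nome (τ / 6) ≠ 0 := Complex.exp_ne_zero _
  have hn1 : nome τ = nome (τ / 6) ^ 6 := by
    rw [nome_pow]; push_cast; ring_nf
  have hn2 : nome (τ / 3) = nome (τ / 6) ^ 2 := by
    rw [nome_pow]; push_cast; ring_nf
  have hn3 : nome (2 * τ / 3) = nome (τ / 6) ^ 4 := by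
    rw [nome_pow]; push_cast; ring_nf
  have hn4 : nome (3 * (2 * τ)) = nome (τ / 6) ^ 36 := by
    rw [nome_pow]; push_cast; ring_nf
  have hexp : Complex.exp (Real.pi * I * (2 * τ / 3) / 12) ^ 3 * nome (τ / 6) ^ 4 =
      Complex.exp (Real.pi * I * (3 * (2 * τ)) / 12) ^ 3 := by
    rw [nome_pow, nome, ← Complex.exp_nat_mul, ← Complex.exp_nat_mul, ← Complex.exp_add]
    push_cast
    ring_nf
  have hc := c_eq hτ
  rw [beta, dedekindEta_eq, dedekindEta_eq, hn3, hn4]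
  rw [hn1, hn2] at hc
  generalize nome (τ / 6) = s at *
  have hn (n : ℕ) (h : n ≠ 0) : ‖s ^ n‖ < 1 := norm_pow_lt_one_of_ne_zero hs h
  have hp (n : ℕ) : s ^ n ≠ 0 := pow_ne_zero n hs0
  have hA := thetaSeries_neg_one (hp 2) (hn 2 (by norm_num))
  have hB := thetaSeries_self hs0 hs
  have hC := thetaSeries_sq_mul_thetaSeries hs0 hs
  have hC9 := thetaSeries_sq_mul_thetaSeries (hp 9) (hn 9 (by norm_num))
  have hGF := two_mul_thetaSeries_mul_thetaSeries (hp 3) (hn 3 (by norm_num))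
  have hF := thetaSeries_eq_prod (hp 18) (hn 18 (by norm_num)) (neg_ne_zero.mpr (hp 12))
  have hΦ := thetaSeries_neg_one_eq_prod (hp 18) (hn 18 (by norm_num))
  have e1 : -((-s ^ 12)⁻¹ * s ^ 18) = s ^ 6 := by field_simp
  have e2 : -(-s ^ 12 * s ^ 18) = s ^ 30 := by ring
  have hE := qPochInf_ne_zero (hn 36 (by norm_num)) (hn 36 (by norm_num))
  have hE' := qPochInf_ne_zero (hn 18 (by norm_num)) (hn 36 (by norm_num))
  rw [e1, e2] at hF
  simp only [← pow_mul, Nat.reduceMul] at hA hB hC hC9 hGF hF hΦ hc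
  have hΦ0 : thetaSeries (s ^ 18) (-1) ≠ 0 := by
    rw [hΦ]; exact mul_ne_zero hE (pow_ne_zero 2 hE')
  have hcF : c τ * thetaSeries (s ^ 18) (-1) = s ^ 2 * thetaSeries (s ^ 18) (-s ^ 12) := by
    rw [hc, hF, hΦ]
    field_simp
  have hP : thetaSeries (s ^ 2) (-1) = thetaSeries (s ^ 18) (-1) * (1 - 2 * c τ) := by
    linear_combination hA + 2 * hcF
  have hGc : 2 * thetaSeries (s ^ 9) (s ^ 3) * c τ = s ^ 2 * thetaSeries (s ^ 9) (s ^ 9) := by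
    apply mul_right_cancel₀ hΦ0
    linear_combination 2 * thetaSeries (s ^ 9) (s ^ 3) * hcF + s ^ 2 * hGF
  have hS : c τ * thetaSeries s s = s ^ 2 * thetaSeries (s ^ 9) (s ^ 9) * (1 + c τ) := by
    linear_combination c τ * hB + hGc
  have hfinal : c τ ^ 2 * qPochInf (s ^ 4) (s ^ 4) ^ 3 =
      s ^ 4 * qPochInf (s ^ 36) (s ^ 36) ^ 3 * ((1 + c τ) ^ 2 * (1 - 2 * c τ)) := by
    have hS2 := congrArg (· ^ 2) hS
    rw [hP] at hC
    linear_combination (-c τ ^ 2 * hC + thetaSeries (s ^ 18) (-1) * (1 - 2 * c τ) * hS2 +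
      s ^ 4 * ((1 + c τ) ^ 2 * (1 - 2 * c τ)) * hC9) / 4
  have hX := Complex.exp_ne_zero (Real.pi * I * (2 * τ / 3) / 12)
  rw [mul_pow, mul_pow, ← hexp, mul_assoc (_ ^ 3), mul_div_mul_left _ _ (pow_ne_zero 3 hX), add_mul,
    div_mul_eq_mul_div, mul_comm (_ ^ 3) (c τ ^ 2), hfinal,
    mul_div_cancel_left₀ _ (mul_ne_zero (hp 4) (pow_ne_zero 3 hE))]
  ring
end
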